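/- arXiv:2011.13171 — 9 statements merged into one kernel-verified Lean document; each statement's English description precedes it below -/
import Mathlib

section
/- There exist a Borel set D ⊆ (ℕ → Bool) with μ(D) = 1 and a function T : (ℕ → Bool) → (ℕ → Bool) such that: μ(D ∩ T⁻¹(A)) = μ(A) for every measurable set A; T is continuous on D (with respect to the product topology); but T is not uniformly continuous on D with respect to the standard metric. -/
open MeasureTheory

/-- The uniform Bernoulli(1/2) ("fair coin") measure on `Bool`. -/
noncomputable def coin : Measure Bool := (PMF.bernoulli 2⁻¹ (by norm_num)).toMeasure

/-- `μ` is the fair-coin measure on Cantor space: the product over `ℕ` of uniform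
Bernoulli(1/2) measures, characterized by the fact that all finite-dimensional marginals
are finite products of `coin`. -/
def IsFairCoin (μ : Measure (ℕ → Bool)) : Prop :=
  IsProjectiveLimit μ (fun J : Finset ℕ => Measure.pi fun _ : J => coin)

open Classical in
/-- The standard metric on Cantor space: `d α β = 2^(-n)` where `n` is the least index
at which `α` and `β` differ, and `d α α = 0`. -/
noncomputable def dC (α β : ℕ → Bool) : ℝ :=
  if α = β then 0 else 2 ^ (-((sInf {n : ℕ | α n ≠ β n} : ℕ) : ℤ))

noncomputable def fstN (α : ℕ → Bool) : ℕ := sInf {k : ℕ | α (k + 1) = true}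

def flip0 (α : ℕ → Bool) : ℕ → Bool := fun n => (if n = 0 then Bool.not else id) (α n)

def dom0 : Set (ℕ → Bool) := {α | ∃ k : ℕ, α (k + 1) = true}

open Classical in
noncomputable def tmap (α : ℕ → Bool) : ℕ → Bool := if Even (fstN α) then flip0 α else α

lemma continuous_flip0 : Continuous flip0 := by
  refine continuous_pi fun n => ?_
  exact (continuous_of_discreteTopology (f := (if n = 0 then Bool.not else id))).comp
    (continuous_apply n)

lemma fstN_eq (α : ℕ → Bool) (n : ℕ) (h : α (n + 1) = true)
    (h2 : ∀ k < n, α (k + 1) = false) : fstN α = n := by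
  unfold fstN
  apply le_antisymm
  · exact Nat.sInf_le h
  · by_contra hlt
    push Not at hlt
    have h3 : sInf {k : ℕ | α (k + 1) = true} ∈ {k : ℕ | α (k + 1) = true} := Nat.sInf_mem ⟨n, h⟩
    have := h2 _ hlt
    simp only [Set.mem_ofPred_eq] at h3
    rw [this] at h3
    exact absurd h3 (by simp)

lemma fstN_spec {α : ℕ → Bool} (h : α ∈ dom0) : α (fstN α + 1) = true :=
  Nat.sInf_mem (s := {k : ℕ | α (k + 1) = true}) h

lemma fstN_lt {α : ℕ → Bool} (k : ℕ) (h : k < fstN α) : α (k + 1) = false := by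
  have := Nat.notMem_of_lt_sInf h
  simpa using this

lemma fstN_flip (α : ℕ → Bool) : fstN (flip0 α) = fstN α := by
  simp [fstN, flip0]

lemma dom_flip (α : ℕ → Bool) : flip0 α ∈ dom0 ↔ α ∈ dom0 := by
  simp [dom0, flip0]

lemma isOpen_coord (n : ℕ) (b : Bool) : IsOpen {β : ℕ → Bool | β n = b} := by
  have h : IsOpen ((fun β : ℕ → Bool => β n) ⁻¹' {b}) :=
    (isOpen_discrete ({b} : Set Bool)).preimage (continuous_apply n)
  exact h

lemma isOpen_dom0 : IsOpen dom0 := by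
  have : dom0 = ⋃ k : ℕ, {β : ℕ → Bool | β (k + 1) = true} := by
    ext; simp [dom0]
  rw [this]
  exact isOpen_iUnion fun k => isOpen_coord _ _

lemma fstN_ev {α : ℕ → Bool} (h : α ∈ dom0) : ∀ᶠ β in nhds α, fstN β = fstN α := by
  have h1 : ∀ᶠ β in nhds α, β (fstN α + 1) = true :=
    (isOpen_coord _ _).mem_nhds (fstN_spec h)
  have h2 : ∀ᶠ β in nhds α, ∀ k ∈ Set.Iio (fstN α), β (k + 1) = false :=
    (Filter.eventually_all_finite (Set.finite_Iio _)).2 fun k hk =>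
      (isOpen_coord _ _).mem_nhds (fstN_lt k hk)
  filter_upwards [h1, h2] with β a b
  exact fstN_eq β _ a b

lemma isOpen_part (P : ℕ → Prop) : IsOpen {α | α ∈ dom0 ∧ P (fstN α)} := by
  rw [isOpen_iff_mem_nhds]
  rintro α ⟨h, hp⟩
  filter_upwards [isOpen_dom0.mem_nhds h, fstN_ev h] with β h1 h2
  exact ⟨h1, by rw [h2]; exact hp⟩

lemma tmap_cont : ContinuousOn tmap dom0 := by
  intro α h
  apply ContinuousAt.continuousWithinAt
  by_cases he : Even (fstN α)
  · refine continuous_flip0.continuousAt.congr ?_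
    filter_upwards [fstN_ev h] with β hb
    simp [tmap, hb, he]
  · refine continuous_id.continuousAt.congr ?_
    filter_upwards [fstN_ev h] with β hb
    simp [tmap, hb, he]

instance : IsProbabilityMeasure coin := by unfold coin; infer_instance

lemma coin_singleton (b : Bool) : coin {b} = 2⁻¹ := by
  unfold coin
  rw [PMF.toMeasure_apply_singleton _ _ (measurableSet_singleton b)]
  cases b <;> simp [PMF.bernoulli_apply]

lemma coin_not : MeasurePreserving Bool.not coin coin := by
  refine ⟨measurable_of_countable _, ?_⟩
  refine Measure.ext_of_singleton fun b => ?_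
  rw [Measure.map_apply (measurable_of_countable _) (measurableSet_singleton b)]
  have : Bool.not ⁻¹' {b} = {!b} := by ext x; cases x <;> cases b <;> simp
  rw [this, coin_singleton, coin_singleton]

lemma flip_mp (μ : Measure (ℕ → Bool)) (hμ : IsFairCoin μ) : MeasurePreserving flip0 μ μ := by
  have hm : Measurable flip0 := continuous_flip0.measurable
  refine ⟨hm, ?_⟩
  have hμ' : IsProjectiveLimit μ (fun J : Finset ℕ => Measure.pi fun _ : J => coin) := hμ
  refine IsProjectiveLimit.unique ?_ hμ'
  intro J
  have hmp : MeasurePreserving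
      (fun (x : J → Bool) (i : J) => (if (i : ℕ) = 0 then Bool.not else id) (x i))
      (Measure.pi fun _ : J => coin) (Measure.pi fun _ : J => coin) := by
    refine measurePreserving_pi (fun _ : J => coin) (fun _ : J => coin) fun i => ?_
    split_ifs
    · exact coin_not
    · exact MeasurePreserving.id _
  rw [Measure.map_map (by fun_prop) hm]
  have hJ := hμ J
  beta_reduce at hJ ⊢
  conv_rhs => rw [← hmp.map_eq, ← hJ]
  rw [Measure.map_map hmp.measurable (by fun_prop)]
  rfl

lemma dom_null (μ : Measure (ℕ → Bool)) (hμ : IsFairCoin μ) : μ dom0ᶜ = 0 := by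
  have key : ∀ n : ℕ, μ dom0ᶜ ≤ (2⁻¹ : ENNReal) ^ n := by
    intro n
    let J : Finset ℕ := Finset.Icc 1 n
    have hs : MeasurableSet (Set.univ.pi fun _ : J => ({false} : Set Bool)) :=
      MeasurableSet.univ_pi fun _ => measurableSet_singleton _
    have h1 : μ (J.restrict ⁻¹' (Set.univ.pi fun _ : J => ({false} : Set Bool)))
        = (2⁻¹ : ENNReal) ^ n := by
      rw [← Measure.map_apply (by fun_prop) hs, hμ J, Measure.pi_pi]
      simp [coin_singleton, J]
    rw [← h1]
    apply measure_mono
    intro α hα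
    simp only [dom0, Set.mem_compl_iff, Set.mem_ofPred_eq, not_exists] at hα
    simp only [Set.mem_preimage, Set.mem_pi, Set.mem_univ, true_imp_iff, Set.mem_singleton_iff]
    rintro ⟨i, hi⟩
    have hi1 : 1 ≤ i := (Finset.mem_Icc.1 hi).1
    have := hα (i - 1)
    rw [Nat.sub_add_cancel hi1] at this
    simpa using this
  have ht : Filter.Tendsto (fun n : ℕ => (2⁻¹ : ENNReal) ^ n) Filter.atTop (nhds 0) :=
    ENNReal.tendsto_pow_atTop_nhds_zero_of_lt_one (by simp)
  exact le_antisymm (ge_of_tendsto' ht key) zero_le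

lemma tmap_meas (μ : Measure (ℕ → Bool)) (hμ : IsFairCoin μ) (A : Set (ℕ → Bool))
    (hA : MeasurableSet A) : μ (dom0 ∩ tmap ⁻¹' A) = μ A := by
  have hE := (isOpen_part (fun n => Even n)).measurableSet
  have hO := (isOpen_part (fun n => ¬ Even n)).measurableSet
  have e1 : dom0 ∩ tmap ⁻¹' A = flip0 ⁻¹' (A ∩ {α | α ∈ dom0 ∧ Even (fstN α)})
      ∪ (A ∩ {α | α ∈ dom0 ∧ ¬ Even (fstN α)}) := by
    ext α
    by_cases he : Even (fstN α) <;>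
      simp [tmap, he, dom_flip, fstN_flip, and_comm, -Nat.not_even_iff_odd]
  have e2 : A ∩ dom0 = (A ∩ {α | α ∈ dom0 ∧ Even (fstN α)})
      ∪ (A ∩ {α | α ∈ dom0 ∧ ¬ Even (fstN α)}) := by
    ext α
    by_cases he : Even (fstN α) <;> simp [he, -Nat.not_even_iff_odd]
  have e3 : μ A = μ (A ∩ dom0) :=
    (measure_inter_conull (dom_null μ hμ)).symm
  rw [e1, e3, e2, measure_union _ (hA.inter hO), measure_union _ (hA.inter hO),
    (flip_mp μ hμ).measure_preimage (hA.inter hE).nullMeasurableSet]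
  · rw [Set.disjoint_left]
    rintro α ⟨_, _, h⟩ ⟨_, _, h'⟩
    exact h' h
  · rw [Set.disjoint_left]
    rintro α ⟨_, _, h⟩ ⟨_, _, h'⟩
    rw [fstN_flip] at h
    exact h' h

/-- There is a partial tossing process (a map `T` defined on a Borel set `D` of full
measure, with `μ (D ∩ T⁻¹ A) = μ A` for all measurable `A`) that is continuous on `D`
for the product topology but not uniformly continuous on `D` for the standard metric. -/
theorem stmt6 (μ : Measure (ℕ → Bool)) (hμ : IsFairCoin μ) :
    ∃ (D : Set (ℕ → Bool)) (T : (ℕ → Bool) → ℕ → Bool),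
      MeasurableSet D ∧ μ D = 1 ∧
      (∀ A : Set (ℕ → Bool), MeasurableSet A → μ (D ∩ T ⁻¹' A) = μ A) ∧
      ContinuousOn T D ∧
      ¬ (∀ ε : ℝ, 0 < ε → ∃ δ : ℝ, 0 < δ ∧
          ∀ α ∈ D, ∀ β ∈ D, dC α β < δ → dC (T α) (T β) < ε) := by
  refine ⟨dom0, tmap, isOpen_dom0.measurableSet, ?_, tmap_meas μ hμ, tmap_cont, ?_⟩
  · have : IsProbabilityMeasure μ := hμ.isProbabilityMeasure
    exact (prob_compl_eq_zero_iff isOpen_dom0.measurableSet).1 (dom_null μ hμ)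
  · intro H
    obtain ⟨δ, hδ, h⟩ := H 1 one_pos
    obtain ⟨n, hn⟩ := exists_pow_lt_of_lt_one hδ (by norm_num : (1 / 2 : ℝ) < 1)
    let u : ℕ → ℕ → Bool := fun m k => decide (m + 1 ≤ k)
    have hu : ∀ m, u m ∈ dom0 := fun m => ⟨m, by simp [u]⟩
    have hN : ∀ m, fstN (u m) = m := fun m =>
      fstN_eq _ _ (by simp [u]) (by intro k hk; simp [u]; omega)
    have hne : u (2 * n) ≠ u (2 * n + 1) := by
      intro he
      have := congrArg fstN he
      rw [hN, hN] at this
      omega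
    have hs : n ≤ sInf {k : ℕ | u (2 * n) k ≠ u (2 * n + 1) k} := by
      have hmem : sInf {k : ℕ | u (2 * n) k ≠ u (2 * n + 1) k} ∈
        {k : ℕ | u (2 * n) k ≠ u (2 * n + 1) k} := Nat.sInf_mem (Function.ne_iff.1 hne)
      generalize sInf {k : ℕ | u (2 * n) k ≠ u (2 * n + 1) k} = m at hmem ⊢
      by_contra hlt
      push Not at hlt
      apply hmem
      simp only [u]
      rw [decide_eq_decide]
      omega
    have hd : dC (u (2 * n)) (u (2 * n + 1)) < δ := by
      refine lt_of_le_of_lt ?_ hn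
      rw [dC, if_neg hne, zpow_neg, zpow_natCast, one_div, inv_pow]
      gcongr
      norm_num
    have h3 := h _ (hu _) _ (hu _) hd
    have h0 : tmap (u (2 * n)) 0 ≠ tmap (u (2 * n + 1)) 0 := by
      have hod : ¬ Even (2 * n + 1) := by simp
      have hev : Even (2 * n) := by simp
      unfold tmap
      rw [hN, hN, if_pos hev, if_neg hod]
      simp [flip0, u]
    have hne2 : tmap (u (2 * n)) ≠ tmap (u (2 * n + 1)) := fun he => h0 (congrFun he 0)
    have hs0 : sInf {k : ℕ | tmap (u (2 * n)) k ≠ tmap (u (2 * n + 1)) k} = 0 :=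
      Nat.sInf_eq_zero.2 (Or.inl h0)
    rw [dC, if_neg hne2, hs0] at h3
    norm_num at h3
end

section
/- There exists a dense G_δ subset A of Cantor space with μ(A) = 1/2 such that for every finite binary word x : List Bool, 0 < μ(A ∩ I_x) < μ(I_x) = 2^(−|x|). In particular both A and its complement are dense and have measure 1/2. -/
open MeasureTheory

/-- The cylinder determined by a finite binary word `x`: the set of infinite binary
sequences having `x` as a prefix. -/
def Cyl (x : List Bool) : Set (ℕ → Bool) := {α | ∀ i : Fin x.length, α i.1 = x.get i}

lemma coin_map : coin.map (fun b => !b) = coin := by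
  refine Measure.ext_of_singleton fun b => ?_
  rw [Measure.map_apply (by fun_prop) (by measurability)]
  have : (fun b : Bool => !b) ⁻¹' {b} = {!b} := by
    ext c; cases b <;> cases c <;> simp
  rw [this, coin_singleton, coin_singleton]

lemma fair_eq {μ : Measure (ℕ → Bool)} (hμ : IsFairCoin μ) :
    μ = Measure.infinitePi (fun _ : ℕ => coin) :=
  IsProjectiveLimit.unique hμ (Measure.isProjectiveLimit_infinitePi _)

def PS (S : Finset ℕ) (c : ℕ → Bool) : Set (ℕ → Bool) := {α | ∀ i ∈ S, α i = c i}

lemma measurableSet_PS (S : Finset ℕ) (c : ℕ → Bool) : MeasurableSet (PS S c) := by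
  have : PS S c = Set.pi (S : Set ℕ) (fun i => {c i}) := by ext; simp [PS, Set.mem_pi]
  rw [this]
  exact .pi S.countable_toSet fun _ _ => by measurability

lemma fair_PS {μ : Measure (ℕ → Bool)} (hμ : IsFairCoin μ) (S : Finset ℕ) (c : ℕ → Bool) :
    μ (PS S c) = 2⁻¹ ^ S.card := by
  have : PS S c = Set.pi (S : Set ℕ) (fun i => {c i}) := by ext; simp [PS, Set.mem_pi]
  rw [this, fair_eq hμ, Measure.infinitePi_pi _ (fun _ _ => by measurability)]
  simp [coin_singleton]

lemma fair_flip {μ : Measure (ℕ → Bool)} (hμ : IsFairCoin μ) :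
    μ.map (fun α i => !(α i)) = μ := by
  rw [fair_eq hμ, Measure.infinitePi_map_pi (fun _ => coin) (f := fun _ b => !b)
    (fun _ => by fun_prop)]
  simp_rw [coin_map]

/-- the window -/
def W (n : ℕ) : Finset ℕ := Finset.Ico (2 ^ n) (2 ^ (n + 1))

lemma card_W (n : ℕ) : (W n).card = 2 ^ n := by
  simp [W, pow_succ]; omega

def EE (n : ℕ) : Set (ℕ → Bool) := ⋃ c : Bool, PS (W n) (fun _ => c)

lemma measurableSet_EE (n : ℕ) : MeasurableSet (EE n) :=
  .iUnion fun _ => measurableSet_PS _ _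

lemma EE_inter {μ : Measure (ℕ → Bool)} (hμ : IsFairCoin μ) (S : Finset ℕ) (c : ℕ → Bool) (n : ℕ)
    (h : Disjoint S (W n)) :
    μ (PS S c ∩ EE n) ≤ μ (PS S c) * 2⁻¹ ^ n := by
  have key (d : Bool) : μ (PS S c ∩ PS (W n) (fun _ => d)) = μ (PS S c) * 2⁻¹ ^ (2 ^ n) := by
    have : PS S c ∩ PS (W n) (fun _ => d) = PS (S ∪ W n) (fun i => if i ∈ S then c i else d) := by
      ext α
      simp only [PS, Set.mem_inter_iff, Set.mem_setOf_eq, Finset.mem_union]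
      constructor
      · rintro ⟨h1, h2⟩ i hi
        by_cases hS : i ∈ S
        · simp [hS, h1]
        · simp only [hS, if_false]; exact h2 i (hi.resolve_left hS)
      · intro h1
        refine ⟨fun i hi => by simpa [hi] using h1 i (Or.inl hi), fun i hi => ?_⟩
        have hS : i ∉ S := Finset.disjoint_right.mp h hi
        simpa [hS] using h1 i (Or.inr hi)
    rw [this, fair_PS hμ, fair_PS hμ, Finset.card_union_of_disjoint h, card_W, pow_add]
  have hn : n + 1 ≤ 2 ^ n := Nat.lt_two_pow_self
  calc μ (PS S c ∩ EE n) = μ (⋃ d : Bool, PS S c ∩ PS (W n) (fun _ => d)) := by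
        rw [EE, Set.inter_iUnion]
    _ ≤ ∑ d : Bool, μ (PS S c ∩ PS (W n) (fun _ => d)) := measure_iUnion_fintype_le _ _
    _ = 2 * (μ (PS S c) * 2⁻¹ ^ (2 ^ n)) := by simp [key, two_mul]
    _ ≤ 2 * (μ (PS S c) * 2⁻¹ ^ (n + 1)) := by
        gcongr 2 * (_ * ?_)
        exact pow_le_pow_right_of_le_one' (by simp) hn
    _ = μ (PS S c) * 2⁻¹ ^ n := by
        rw [pow_succ, mul_left_comm, mul_left_comm (2 : ENNReal),
          ENNReal.mul_inv_cancel (by simp) (by simp), mul_one]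

def BB (b : Bool) : Set (ℕ → Bool) :=
  ⋃ n, PS (W n) (fun _ => b) ∩ ⋂ m ∈ Set.Ioi n, (EE m)ᶜ

lemma measurableSet_BB (b : Bool) : MeasurableSet (BB b) := by
  refine .iUnion fun n => (measurableSet_PS _ _).inter ?_
  exact .biInter (Set.to_countable _) fun m _ => (measurableSet_EE m).compl

lemma W_ne (n : ℕ) : 2 ^ n ∈ W n := by
  simp [W, pow_succ]

lemma disj_BB : Disjoint (BB true) (BB false) := by
  rw [Set.disjoint_left]
  intro α h1 h2
  simp only [BB, Set.mem_iUnion, Set.mem_inter_iff, Set.mem_iInter, Set.mem_Ioi, Set.mem_compl_iff,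
    EE, not_exists] at h1 h2
  obtain ⟨n, a, b⟩ := h1
  obtain ⟨m, c, d⟩ := h2
  rcases lt_trichotomy n m with h | h | h
  · exact b m h _ c
  · subst h
    have := a _ (W_ne n)
    have := c _ (W_ne n)
    simp_all
  · exact d n h _ a

lemma flip_BB : (fun (α : ℕ → Bool) i => !(α i)) ⁻¹' (BB true) = BB false := by
  have h (n : ℕ) (d : Bool) : (fun (α : ℕ → Bool) i => !(α i)) ⁻¹' PS (W n) (fun _ => d) =
      PS (W n) (fun _ => !d) := by
    ext α; cases d <;> simp [PS]
  have h2 (n : ℕ) : (fun (α : ℕ → Bool) i => !(α i)) ⁻¹' EE n = EE n := by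
    simp only [EE, Set.preimage_iUnion, h]
    ext α
    simp [or_comm]
  simp only [BB, Set.preimage_iUnion, Set.preimage_inter, Set.preimage_iInter, Set.preimage_compl,
    h, h2, Bool.not_true]

lemma union_BB {μ : Measure (ℕ → Bool)} (hμ : IsFairCoin μ) : ∀ᵐ α ∂μ, α ∈ BB true ∪ BB false := by
  have hE (n : ℕ) : μ (EE n) ≤ 2⁻¹ ^ n := by
    have := EE_inter hμ ∅ (fun _ => true) n (by simp)
    have h0 : PS ∅ (fun _ => true) = Set.univ := by ext; simp [PS]
    have h1 : μ Set.univ = 1 := by rw [← h0, fair_PS hμ]; simp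
    simpa [h0, h1] using this
  have hs : ∑' n, μ (EE n) ≠ ⊤ := by
    refine ne_top_of_le_ne_top ?_ (ENNReal.tsum_le_tsum hE)
    rw [ENNReal.tsum_geometric]; simp
  filter_upwards [ae_eventually_notMem hs] with α hα
  obtain ⟨N, hN⟩ := Filter.eventually_atTop.mp hα
  have h0 : α ∈ EE 0 := by
    simp only [EE, Set.mem_iUnion]
    refine ⟨α 1, fun i hi => ?_⟩
    have : i = 1 := by simp [W] at hi; omega
    rw [this]
  classical
  let n := Nat.findGreatest (fun k => α ∈ EE k) N
  have hn : α ∈ EE n := Nat.findGreatest_spec (P := fun k => α ∈ EE k) (Nat.zero_le N) h0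
  have hm : ∀ m ∈ Set.Ioi n, α ∉ EE m := by
    intro m hm
    rcases le_or_gt m N with h | h
    · exact Nat.findGreatest_is_greatest hm h
    · exact hN m h.le
  obtain ⟨b, hb⟩ := Set.mem_iUnion.mp hn
  have : α ∈ BB b := Set.mem_iUnion.mpr ⟨n, hb, by simpa using hm⟩
  cases b
  · exact Or.inr this
  · exact Or.inl this

lemma pos_BB {μ : Measure (ℕ → Bool)} (hμ : IsFairCoin μ) (b : Bool) (x : List Bool) :
    0 < μ (BB b ∩ Cyl x) := by
  set n := x.length + 1 with hn
  have hlt : x.length < 2 ^ n := lt_trans (Nat.lt_succ_self _) Nat.lt_two_pow_self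
  set c : ℕ → Bool := fun i => x.getD i b with hc
  set G := PS (Finset.range (2 ^ (n + 1))) c with hG
  have hsub : G ⊆ (BB b ∩ Cyl x) ∪ ⋃ k, G ∩ EE (n + 1 + k) := by
    intro α hα
    by_cases h : ∃ k, α ∈ EE (n + 1 + k)
    · obtain ⟨k, hk⟩ := h
      exact Or.inr (Set.mem_iUnion.mpr ⟨k, hα, hk⟩)
    · push Not at h
      refine Or.inl ⟨Set.mem_iUnion.mpr ⟨n, ?_, ?_⟩, ?_⟩
      · intro i hi
        simp only [W, Finset.mem_Ico] at hi
        rw [hα i (by simpa using hi.2)]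
        simp only [hc]
        exact List.getD_eq_default _ _ (by omega)
      · simp only [Set.mem_iInter, Set.mem_Ioi, Set.mem_compl_iff]
        intro m hm
        obtain ⟨k, rfl⟩ := Nat.exists_eq_add_of_le (Nat.succ_le_of_lt hm)
        exact h k
      · intro i
        have h1 := i.2
        rw [hα i.1 (by simp [pow_succ]; omega)]
        simp [hc]
  have hGpos : μ G ≠ 0 := by rw [hG, fair_PS hμ]; simp
  have hGtop : μ G ≠ ⊤ := by rw [hG, fair_PS hμ]; exact ENNReal.pow_ne_top (by simp)
  rw [pos_iff_ne_zero]
  intro h0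
  have h1 : μ G ≤ μ G * 2⁻¹ := by
    calc μ G ≤ μ (BB b ∩ Cyl x) + μ (⋃ k, G ∩ EE (n + 1 + k)) :=
          (measure_mono hsub).trans (measure_union_le _ _)
      _ ≤ ∑' k, μ (G ∩ EE (n + 1 + k)) := by rw [h0, zero_add]; exact measure_iUnion_le _
      _ ≤ ∑' k : ℕ, μ G * (2⁻¹ ^ 2 * 2⁻¹ ^ k) := by
          refine ENNReal.tsum_le_tsum fun k => ?_
          refine (EE_inter hμ _ c _ ?_).trans ?_
          · rw [Finset.disjoint_left]
            intro i hi hi'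
            simp only [W, Finset.mem_Ico, Finset.mem_range] at hi hi'
            have : 2 ^ (n + 1) ≤ 2 ^ (n + 1 + k) := Nat.pow_le_pow_right (by norm_num) (by omega)
            omega
          · rw [← pow_add]
            gcongr _ * ?_
            exact pow_le_pow_right_of_le_one' (by simp) (by omega)
      _ = μ G * 2⁻¹ := by
          rw [ENNReal.tsum_mul_left, ENNReal.tsum_mul_left, ENNReal.tsum_geometric]
          congr 1
          rw [ENNReal.one_sub_inv_two, inv_inv, pow_two, mul_assoc,
            ENNReal.inv_mul_cancel (by simp) (by simp), mul_one]
  have h2 : μ G * 2⁻¹ < μ G := by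
    rw [← div_eq_mul_inv]; exact ENNReal.half_lt_self hGpos hGtop
  exact absurd h1 (not_le.mpr h2)

lemma dense_of_Cyl (A : Set (ℕ → Bool)) (h : ∀ x, (A ∩ Cyl x).Nonempty) : Dense A := by
  rw [dense_iff_inter_open]
  rintro U hU ⟨α, hα⟩
  obtain ⟨I, u, hu, hsub⟩ := isOpen_pi_iff.mp hU α hα
  obtain ⟨N, hN⟩ := I.exists_nat_subset_range
  obtain ⟨β, hβ, hβ'⟩ := h (List.ofFn fun i : Fin N => α i)
  refine ⟨β, hsub fun i hi => ?_, hβ⟩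
  have hi' : i < N := by simpa using hN hi
  have := hβ' ⟨i, by simpa using hi'⟩
  simp at this
  rw [this]
  exact (hu i hi).2

lemma exists_Gdelta (μ : Measure (ℕ → Bool)) [IsFiniteMeasure μ] (B : Set (ℕ → Bool)) :
    ∃ A, IsGδ A ∧ B ⊆ A ∧ μ A = μ B := by
  have (n : ℕ) : ∃ U, U ⊇ B ∧ IsOpen U ∧ μ U ≤ μ B + (n : ENNReal)⁻¹ :=
    B.exists_isOpen_le_add μ (by simp)
  choose U h1 h2 h3 using this
  refine ⟨⋂ n, U n, .iInter_of_isOpen h2, Set.subset_iInter h1, le_antisymm ?_ ?_⟩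
  · refine ge_of_tendsto' (x := Filter.atTop) (f := fun n : ℕ => μ B + (n : ENNReal)⁻¹) ?_
      fun n => (measure_mono (Set.iInter_subset _ n)).trans (h3 n)
    simpa using tendsto_const_nhds.add ENNReal.tendsto_inv_nat_nhds_zero
  · exact measure_mono (Set.subset_iInter h1)

/-- There is a dense `G_δ` subset `A` of Cantor space with `μ A = 1/2` such that
`0 < μ (A ∩ I_x) < μ I_x = 2^(-|x|)` for every finite binary word `x`; in particular
both `A` and its complement are dense of measure `1/2`. -/
theorem stmt9 (μ : Measure (ℕ → Bool)) (hμ : IsFairCoin μ) :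
    ∃ A : Set (ℕ → Bool),
      IsGδ A ∧ Dense A ∧ μ A = 1 / 2 ∧
      (∀ x : List Bool,
        0 < μ (A ∩ Cyl x) ∧ μ (A ∩ Cyl x) < μ (Cyl x) ∧
          μ (Cyl x) = 2 ^ (-(x.length : ℤ))) ∧
      Dense Aᶜ ∧ μ Aᶜ = 1 / 2 := by
  have hprob : IsProbabilityMeasure μ := by rw [fair_eq hμ]; infer_instance
  obtain ⟨A, hA, hBA, hAB⟩ := exists_Gdelta μ (BB true)
  have hae : BB true =ᵐ[μ] A :=
    ae_eq_of_subset_of_measure_ge hBA hAB.le (measurableSet_BB true).nullMeasurableSet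
      (measure_ne_top _ _)
  have hflip : μ (BB false) = μ (BB true) := by
    conv_rhs => rw [← fair_flip hμ]
    rw [Measure.map_apply (by fun_prop) (measurableSet_BB true), flip_BB]
  have hsum : μ (BB true) + μ (BB false) = 1 := by
    rw [← measure_union disj_BB (measurableSet_BB false)]
    exact prob_compl_eq_zero_iff
      ((measurableSet_BB true).union (measurableSet_BB false)) |>.mp (union_BB hμ)
  have hhalf : μ (BB true) = 1 / 2 := by
    rw [hflip, ← two_mul] at hsum
    rw [ENNReal.eq_div_iff (by simp) (by simp)]
    exact hsum
  have hAm : MeasurableSet A := hA.measurableSet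
  have hAhalf : μ A = 1 / 2 := hAB.trans hhalf
  have hCyl (x : List Bool) : Cyl x = PS (Finset.range x.length) (fun i => x.getD i true) := by
    ext α
    simp only [Cyl, PS, Set.mem_setOf_eq, Finset.mem_range]
    constructor
    · intro h i hi
      have := h ⟨i, hi⟩
      simpa [hi] using this
    · intro h i
      have := h i.1 i.2
      simpa using this
  have hpos (x : List Bool) : 0 < μ (A ∩ Cyl x) :=
    (pos_BB hμ true x).trans_le (measure_mono (Set.inter_subset_inter_left _ hBA))
  have hpos' (x : List Bool) : 0 < μ (Aᶜ ∩ Cyl x) := by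
    have h1 : μ (Aᶜ ∩ Cyl x) = μ ((BB true)ᶜ ∩ Cyl x) :=
      measure_congr (hae.symm.compl.inter (ae_eq_refl _))
    rw [h1]
    exact (pos_BB hμ false x).trans_le
      (measure_mono (Set.inter_subset_inter_left _ disj_BB.subset_compl_left))
  refine ⟨A, hA, dense_of_Cyl _ fun x => nonempty_of_measure_ne_zero (hpos x).ne', hAhalf,
    fun x => ⟨hpos x, ?_, ?_⟩,
    dense_of_Cyl _ fun x => nonempty_of_measure_ne_zero (hpos' x).ne', ?_⟩
  · have h : μ (Cyl x) = μ (A ∩ Cyl x) + μ (Aᶜ ∩ Cyl x) := by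
      rw [← measure_inter_add_sdiff (Cyl x) hAm, Set.inter_comm, Set.diff_eq,
        Set.inter_comm (Cyl x) Aᶜ]
    rw [h]
    exact ENNReal.lt_add_right (measure_ne_top _ _) (hpos' x).ne'
  · rw [hCyl, fair_PS hμ, Finset.card_range, ENNReal.zpow_neg, zpow_natCast, ENNReal.inv_pow]
  · rw [prob_compl_eq_one_sub hAm, hAhalf]
    simp
end

section
/- Every continuous tossing process is surjective: if T : (ℕ → Bool) → (ℕ → Bool) is continuous for the product topology and measure-preserving for the fair-coin measure μ (μ(T⁻¹(A)) = μ(A) for all measurable A), then T is surjective. -/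
open MeasureTheory

theorem coin_singleton_ne_zero (b : Bool) : coin {b} ≠ 0 := by
  unfold coin
  rw [PMF.toMeasure_apply_singleton _ _ (measurableSet_singleton b)]
  cases b <;> simp [PMF.bernoulli_apply]

instance coin_isProb : IsProbabilityMeasure coin := by
  unfold coin; infer_instance

/-- Every continuous tossing process is surjective: a map on Cantor space that is
continuous for the product topology and measure-preserving for the fair-coin measure
is surjective. -/
theorem stmt10 (μ : Measure (ℕ → Bool)) (hμ : IsFairCoin μ)
    (T : (ℕ → Bool) → ℕ → Bool) (hc : Continuous T)
    (hmp : ∀ A : Set (ℕ → Bool), MeasurableSet A → μ (T ⁻¹' A) = μ A) :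
    Function.Surjective T := by
  intro y
  by_contra hy
  have hcl : IsOpen (Set.range T)ᶜ := (isCompact_range hc).isClosed.isOpen_compl
  obtain ⟨I, u, hu, hsub⟩ := isOpen_pi_iff.1 hcl y hy
  let S : Set (I → Bool) := Set.univ.pi fun i => {y i}
  have hS : MeasurableSet S := MeasurableSet.univ_pi fun i => measurableSet_singleton _
  have hr : Measurable (I.restrict (π := fun _ : ℕ => Bool)) := Finset.measurable_restrict I
  have h1 : μ (I.restrict ⁻¹' S) = ∏ i : I, coin {y i} := by
    rw [← Measure.map_apply hr hS, hμ I, Measure.pi_pi]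
  have h2 : T ⁻¹' (I.restrict ⁻¹' S) = ∅ := by
    ext x
    simp only [Set.mem_preimage, Set.mem_empty_iff_false, iff_false]
    intro hx
    refine hsub (a := T x) ?_ ⟨x, rfl⟩
    intro i hi
    have h3 : T x i = y i := hx ⟨i, hi⟩ (Set.mem_univ _)
    rw [h3]
    exact (hu i hi).2
  have h4 := hmp _ (hr hS)
  rw [h2, measure_empty, h1] at h4
  obtain ⟨i, _, hi⟩ := Finset.prod_eq_zero_iff.1 h4.symm
  exact coin_singleton_ne_zero _ hi
end

section
/- Let t : List Bool → ℕ be a labeled binary tree with no repetition of labels along any path: if x is a proper prefix of y then t(x) ≠ t(y). Then there exists a unique function T : (ℕ → Bool) → (ℕ → Bool) satisfying, for all α and n, (T α) n = α (t [T α 0, T α 1, …, T α (n−1)]) (where the argument of t is the list of the first n output bits). Moreover this T is a tossing process: it is measurable and μ(T⁻¹(A)) = μ(A) for every measurable set A. -/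
open MeasureTheory

def treeL (t : List Bool → ℕ) (α : ℕ → Bool) : ℕ → List Bool
  | 0 => []
  | n + 1 => treeL t α n ++ [α (t (treeL t α n))]

lemma treeL_eq (t : List Bool → ℕ) (α : ℕ → Bool) (n : ℕ) :
    treeL t α n = List.ofFn fun i : Fin n => α (t (treeL t α i.1)) := by
  induction n with
  | zero => simp [treeL]
  | succ n ih =>
    rw [List.ofFn_succ_last]
    simp only [Fin.val_castSucc, Fin.val_last]
    rw [← ih, treeL]

instance coin_prob : IsProbabilityMeasure coin := by
  unfold coin; infer_instance

lemma cyl_measure (μ : Measure (ℕ → Bool)) (hμ : IsFairCoin μ) (f : ℕ → ℕ)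
    (hf : Function.Injective f) (b : ℕ → Bool) (n : ℕ) :
    μ {α | ∀ i < n, α (f i) = b i} = 2⁻¹ ^ n := by
  have key : {α : ℕ → Bool | ∀ i < n, α (f i) = b i} =
      (((Finset.range n).image f).restrict (π := fun _ => Bool)) ⁻¹'
        (Set.univ.pi fun j => {b (Function.invFun f j.1)}) := by
    ext α
    simp [Set.mem_pi, Function.leftInverse_invFun hf _]
  have h := hμ ((Finset.range n).image f)
  rw [key, ← Measure.map_apply (Finset.measurable_restrict _)
    (MeasurableSet.univ_pi fun _ => measurableSet_singleton _), h, Measure.pi_pi]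
  simp [coin_singleton, Finset.card_image_of_injective _ hf]

lemma tree_meas (t : List Bool → ℕ) (T : (ℕ → Bool) → ℕ → Bool)
    (hT : ∀ (α : ℕ → Bool) (n : ℕ), T α n = α (t (List.ofFn fun i : Fin n => T α i.1))) :
    Measurable T := by
  rw [measurable_pi_iff]
  intro n
  induction n using Nat.strong_induction_on with
  | _ n ih =>
    have h1 : Measurable (fun p : (ℕ → Bool) × (Fin n → Bool) => p.1 (t (List.ofFn p.2))) :=
      measurable_from_prod_countable_left fun v => measurable_pi_apply (t (List.ofFn v))
    have h2 : Measurable (fun α : ℕ → Bool => (α, fun i : Fin n => T α i.1)) :=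
      measurable_id.prodMk (measurable_pi_iff.2 fun i => ih i.1 i.2)
    have h3 := h1.comp h2
    convert h3 using 1
    funext α
    exact hT α n

lemma ofFn_prefix (b : ℕ → Bool) {i j : ℕ} (h : i ≤ j) :
    (List.ofFn fun k : Fin i => b k.1) <+: (List.ofFn fun k : Fin j => b k.1) := by
  induction j, h using Nat.le_induction with
  | base => exact List.prefix_rfl
  | succ j _ ih =>
    rw [List.ofFn_succ_last]
    exact ih.trans (List.prefix_append _ _)

lemma path_inj (t : List Bool → ℕ) (ht : ∀ x y : List Bool, x <+: y → x ≠ y → t x ≠ t y)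
    (b : ℕ → Bool) : Function.Injective fun i : ℕ => t (List.ofFn fun k : Fin i => b k.1) := by
  refine Function.Injective.of_lt_imp_ne fun i j h => ?_
  refine ht _ _ (ofFn_prefix b h.le) fun e => ?_
  have := congrArg List.length e
  simp at this
  omega

lemma tree_cyl (t : List Bool → ℕ) (T : (ℕ → Bool) → ℕ → Bool)
    (hT : ∀ (α : ℕ → Bool) (n : ℕ), T α n = α (t (List.ofFn fun i : Fin n => T α i.1)))
    (b α : ℕ → Bool) (n : ℕ) :
    (∀ i < n, T α i = b i) ↔ ∀ i < n, α (t (List.ofFn fun k : Fin i => b k.1)) = b i := by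
  induction n with
  | zero => simp
  | succ n ih =>
    rw [Nat.forall_lt_succ_right, Nat.forall_lt_succ_right, ← ih]
    refine and_congr_right fun h => ?_
    have : (fun k : Fin n => T α k.1) = fun k : Fin n => b k.1 := funext fun k => h k.1 k.2
    rw [hT, this]

lemma fair_of_cyl (μ ν : Measure (ℕ → Bool)) (hμ : IsFairCoin μ)
    (h : ∀ (b : ℕ → Bool) (n : ℕ), ν {α | ∀ i < n, α i = b i} = μ {α | ∀ i < n, α i = b i}) :
    ν = μ := by
  have hν : IsFairCoin ν := by
    intro J
    rw [← hμ J]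
    obtain ⟨n, hn⟩ := J.exists_nat_subset_range
    have e : ν.map (Finset.range n).restrict = μ.map (Finset.range n).restrict := by
      refine Measure.ext_of_singleton fun x => ?_
      rw [Measure.map_apply (Finset.measurable_restrict _) (measurableSet_singleton _),
        Measure.map_apply (Finset.measurable_restrict _) (measurableSet_singleton _)]
      have : ((Finset.range n).restrict (π := fun _ => Bool)) ⁻¹' {x} = {α : ℕ → Bool | ∀ i < n,
          α i = (fun i => if hi : i ∈ Finset.range n then x ⟨i, hi⟩ else false) i} := by
        ext α
        simp only [Set.mem_preimage, Set.mem_singleton_iff, funext_iff, Set.mem_ofPred_eq,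
          Finset.restrict, Subtype.forall]
        constructor
        · intro H i hi
          rw [dif_pos (Finset.mem_range.2 hi)]
          exact H i _
        · intro H i hi
          have := H i (Finset.mem_range.1 hi)
          rwa [dif_pos hi] at this
      rw [this]
      exact h _ n
    have r : (J.restrict : (ℕ → Bool) → _) =
        Finset.restrict₂ hn ∘ (Finset.range n).restrict := rfl
    rw [r, ← Measure.map_map (Finset.measurable_restrict₂ hn) (Finset.measurable_restrict _), e,
      Measure.map_map (Finset.measurable_restrict₂ hn) (Finset.measurable_restrict _)]
  exact IsProjectiveLimit.unique hν hμ

/-- For a labeled tree `t : List Bool → ℕ` with no repeated labels along any path, there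
is a unique map `T` on Cantor space with `(T α) n = α (t [T α 0, …, T α (n-1)])`;
moreover any such `T` is a tossing process (measurable and measure-preserving for the
fair-coin measure). -/
theorem stmt13 (μ : Measure (ℕ → Bool)) (hμ : IsFairCoin μ)
    (t : List Bool → ℕ) (ht : ∀ x y : List Bool, x <+: y → x ≠ y → t x ≠ t y) :
    (∃! T : (ℕ → Bool) → ℕ → Bool,
      ∀ (α : ℕ → Bool) (n : ℕ), T α n = α (t (List.ofFn fun i : Fin n => T α i.1))) ∧
    ∀ T : (ℕ → Bool) → ℕ → Bool,
      (∀ (α : ℕ → Bool) (n : ℕ), T α n = α (t (List.ofFn fun i : Fin n => T α i.1))) →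
      Measurable T ∧ ∀ A : Set (ℕ → Bool), MeasurableSet A → μ (T ⁻¹' A) = μ A := by
  refine ⟨⟨fun α n => α (t (treeL t α n)), fun α n => ?_, fun T hT => ?_⟩, fun T hT => ?_⟩
  · simp only
    rw [← treeL_eq]
  · funext α n
    induction n using Nat.strong_induction_on with
    | _ n ih =>
      have : (fun k : Fin n => T α k.1) = fun k : Fin n => α (t (treeL t α k.1)) :=
        funext fun k => ih k.1 k.2
      rw [hT, this, ← treeL_eq]
  · have hm := tree_meas t T hT
    refine ⟨hm, fun A hA => ?_⟩
    rw [← Measure.map_apply hm hA]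
    congr 1
    refine fair_of_cyl μ _ hμ fun b n => ?_
    have hC : MeasurableSet {α : ℕ → Bool | ∀ i < n, α i = b i} := by
      measurability
    rw [Measure.map_apply hm hC]
    have : T ⁻¹' {α : ℕ → Bool | ∀ i < n, α i = b i} =
        {α | ∀ i < n, α (t (List.ofFn fun k : Fin i => b k.1)) = b i} := by
      ext α
      exact tree_cyl t T hT b α n
    rw [this, cyl_measure μ hμ _ (path_inj t ht b) b n]
    exact (cyl_measure μ hμ id Function.injective_id b n).symm
end

section
/- Let t : List Bool → ℕ satisfy t(x) ≠ t(y) whenever x is a proper prefix of y, and let T be the associated tree process, i.e., the unique map with (T α) n = α (t [T α 0, …, T α (n−1)]) for all α, n. Then for every n, if m is any natural number with t(w) < m for all words w of length at most n, then T α and T β agree on their length-n prefixes whenever α and β agree on their length-m prefixes. Consequently T is uniformly continuous with respect to the standard metric on Cantor space. -/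
/-- For a tree process `T` determined by the labeled tree `t` (no repeated labels along
any path), the first `n` output bits depend only on the first `m` input bits whenever `m`
bounds all labels of nodes of depth at most `n`; consequently `T` is uniformly continuous
for the standard metric on Cantor space. -/
theorem stmt14 (t : List Bool → ℕ) (ht : ∀ x y : List Bool, x <+: y → x ≠ y → t x ≠ t y)
    (T : (ℕ → Bool) → ℕ → Bool)
    (hT : ∀ (α : ℕ → Bool) (n : ℕ), T α n = α (t (List.ofFn fun i : Fin n => T α i.1))) :
    (∀ n m : ℕ, (∀ w : List Bool, w.length ≤ n → t w < m) →
      ∀ α β : ℕ → Bool, (∀ i < m, α i = β i) → ∀ i < n, T α i = T β i) ∧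
    ∀ ε : ℝ, 0 < ε → ∃ δ : ℝ, 0 < δ ∧
      ∀ α β : ℕ → Bool, dC α β < δ → dC (T α) (T β) < ε := by
  have key : ∀ n m : ℕ, (∀ w : List Bool, w.length ≤ n → t w < m) →
      ∀ α β : ℕ → Bool, (∀ i < m, α i = β i) → ∀ i < n, T α i = T β i := by
    intro n m hm α β hab i
    induction i using Nat.strong_induction_on with
    | _ i ih =>
      intro hi
      have hl : (List.ofFn fun j : Fin i => T α j.1) = List.ofFn fun j : Fin i => T β j.1 := by
        congr 1
        funext j
        exact ih j.1 j.2 (j.2.trans hi)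
      rw [hT α i, hT β i, hl]
      apply hab
      apply hm
      simp only [List.length_ofFn]
      exact hi.le
  refine ⟨key, ?_⟩
  intro ε hε
  obtain ⟨n, hn⟩ := exists_pow_lt_of_lt_one hε (by norm_num : (1 / 2 : ℝ) < 1)
  obtain ⟨M, hM⟩ := ((List.finite_length_le Bool n).image t).bddAbove
  have hM' : ∀ w : List Bool, w.length ≤ n → t w < M + 1 := fun w hw =>
    Nat.lt_succ_of_le (hM ⟨w, hw, rfl⟩)
  refine ⟨2 ^ (-((M + 1 : ℕ) : ℤ)), by positivity, ?_⟩
  intro α β hd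
  have hab : ∀ i < M + 1, α i = β i := by
    intro i hi
    by_contra hne
    have hαβ : α ≠ β := fun h => hne (by rw [h])
    rw [dC, if_neg hαβ, zpow_lt_zpow_iff_right₀ (by norm_num)] at hd
    have : sInf {n : ℕ | α n ≠ β n} ≤ i := Nat.sInf_le hne
    omega
  have hT' := key n (M + 1) hM' α β hab
  rw [dC]
  split_ifs with h
  · exact hε
  · refine lt_of_le_of_lt ?_ hn
    have hne : {k : ℕ | T α k ≠ T β k}.Nonempty := Function.ne_iff.mp h
    have h1 : n ≤ sInf {k : ℕ | T α k ≠ T β k} := by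
      by_contra hlt
      exact Nat.sInf_mem hne (hT' _ (not_le.mp hlt))
    have h2 : ((1 / 2 : ℝ)) ^ n = 2 ^ (-(n : ℤ)) := by
      rw [zpow_neg, zpow_natCast, one_div, inv_pow]
    rw [h2, zpow_le_zpow_iff_right₀ (by norm_num)]
    omega
end

section
/- Let B# be the poset of finite and infinite binary strings under the prefix order, modeled as B# = {f : ℕ → Option Bool // ∀ n, f (n+1) ≠ none → f n ≠ none} with f ⊑ g iff ∀ n b, f n = some b → g n = some b, equipped with the Scott topology, and let ι : (ℕ → Bool) → B# be the embedding (ι α) n = some (α n). Then: (i) for every Scott-open subset B of B#, the preimage ι⁻¹(B) is open in the product (Cantor) topology on ℕ → Bool; (ii) for every Cantor-open set A ⊆ (ℕ → Bool), the set B_A = {x ∈ B# | ∀ α, x ⊑ ι α → α ∈ A} is Scott-open, ι⁻¹(B_A) = A, and B_A is the largest Scott-open subset B of B# with ι⁻¹(B) = A (i.e., any Scott-open B with ι⁻¹(B) = A satisfies B ⊆ B_A). -/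
/-- `B#`: the domain of finite and infinite binary strings, modeled as monotone-domain
functions `ℕ → Option Bool` (defined on an initial segment of `ℕ`). -/
def Bsharp : Type := {f : ℕ → Option Bool // ∀ n, f (n + 1) ≠ none → f n ≠ none}

/-- The prefix (information) order on `B#`. -/
instance : PartialOrder Bsharp where
  le f g := ∀ n b, f.1 n = some b → g.1 n = some b
  le_refl _ _ _ h := h
  le_trans _ _ _ hfg hgh n b hb := hgh n b (hfg n b hb)
  le_antisymm f g hfg hgf := by
    apply Subtype.ext
    funext n
    cases hf : f.1 n with
    | none =>
      cases hg : g.1 n with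
      | none => rfl
      | some b =>
        have h2 := hgf n b hg
        rw [hf] at h2
        exact h2
    | some b => exact (hfg n b hf).symm

/-- `B#` carries the Scott topology. -/
instance : TopologicalSpace Bsharp := Topology.scott Bsharp Set.univ

/-- The embedding of Cantor space (infinite binary strings) into `B#`. -/
def iota (α : ℕ → Bool) : Bsharp :=
  ⟨fun n => some (α n), fun n _ => Option.some_ne_none (α n)⟩

instance : Topology.IsScott Bsharp Set.univ := ⟨rfl⟩

def btrunc (α : ℕ → Bool) (n : ℕ) : Bsharp :=
  ⟨fun i => if i < n then some (α i) else none, by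
    intro i h
    by_cases hi : i + 1 < n
    · have : i < n := by omega
      simp [this]
    · simp [hi] at h⟩

theorem btrunc_le (α β : ℕ → Bool) (n : ℕ) (h : ∀ i < n, β i = α i) :
    btrunc α n ≤ iota β := by
  intro i b hb
  by_cases hi : i < n
  · simp only [btrunc, hi, if_true] at hb
    simpa [iota, h i hi] using hb
  · simp [btrunc, hi] at hb

theorem btrunc_mono (α : ℕ → Bool) : Monotone (btrunc α) := by
  intro m n hmn i b hb
  by_cases hi : i < m
  · have h2 : i < n := by omega
    simpa [btrunc, hi, h2] using hb
  · simp [btrunc, hi] at hb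

theorem btrunc_lub (α : ℕ → Bool) : IsLUB (Set.range (btrunc α)) (iota α) := by
  constructor
  · rintro _ ⟨n, rfl⟩
    exact btrunc_le α α n (fun _ _ => rfl)
  · intro u hu i b hb
    refine hu ⟨i + 1, rfl⟩ i b ?_
    simpa [btrunc, iota] using hb

theorem isClosed_le_iota (x : Bsharp) : IsClosed {β : ℕ → Bool | x ≤ iota β} := by
  have : {β : ℕ → Bool | x ≤ iota β} = ⋂ n, (fun β : ℕ → Bool => β n) ⁻¹' {c | ∀ b, x.1 n = some b → some c = some b} := by
    ext β
    simp only [Set.mem_iInter]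
    rfl
  rw [this]
  exact isClosed_iInter fun n => (isClosed_discrete _).preimage (continuous_apply n)

/-- (i) Preimages under `ι` of Scott-open subsets of `B#` are open in the product
(Cantor) topology; (ii) for every Cantor-open `A`, the set
`B_A = {x | ∀ α, x ⊑ ι α → α ∈ A}` is Scott-open, satisfies `ι⁻¹ B_A = A`, and is the
largest Scott-open set with this property. -/
theorem stmt15 :
    (∀ B : Set Bsharp, IsOpen B → IsOpen (iota ⁻¹' B)) ∧
    ∀ A : Set (ℕ → Bool), IsOpen A →
      IsOpen {x : Bsharp | ∀ α : ℕ → Bool, x ≤ iota α → α ∈ A} ∧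
      iota ⁻¹' {x : Bsharp | ∀ α : ℕ → Bool, x ≤ iota α → α ∈ A} = A ∧
      ∀ B : Set Bsharp, IsOpen B → iota ⁻¹' B = A →
        B ⊆ {x : Bsharp | ∀ α : ℕ → Bool, x ≤ iota α → α ∈ A} := by
  refine ⟨?_, ?_⟩
  · intro B hB
    rw [isOpen_iff_forall_mem_open]
    intro α hα
    obtain ⟨hU, hD⟩ :=
      (Topology.IsScott.isOpen_iff_isUpperSet_and_dirSupInaccOn (D := Set.univ)).1 hB
    obtain ⟨_, ⟨n, rfl⟩, hn⟩ := hD (Set.mem_univ (Set.range (btrunc α)))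
      (Set.range_nonempty _) (directedOn_range.2 (btrunc_mono α).directed_le) (btrunc_lub α) hα
    refine ⟨⋂ i ∈ Set.Iio n, (fun β : ℕ → Bool => β i) ⁻¹' {α i}, ?_, ?_, ?_⟩
    · intro β hβ
      refine hU (btrunc_le α β n ?_) hn
      simpa using hβ
    · exact (Set.finite_Iio n).isOpen_biInter fun i _ =>
        (isOpen_discrete _).preimage (continuous_apply i)
    · simp
  · intro A hA
    refine ⟨?_, ?_, ?_⟩
    · rw [Topology.IsScott.isOpen_iff_isUpperSet_and_dirSupInaccOn (D := Set.univ)]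
      refine ⟨fun x y hxy hx α hα => hx α (hxy.trans hα), ?_⟩
      intro d _ hne hdir a ha haA
      by_contra hcon
      have key : ∀ x ∈ d, ∃ α, x ≤ iota α ∧ α ∉ A := by
        intro x hx
        by_contra h
        push Not at h
        exact hcon ⟨x, hx, h⟩
      have : Nonempty d := hne.to_subtype
      have hcl : ∀ x : d, IsClosed ({β : ℕ → Bool | x.1 ≤ iota β} ∩ Aᶜ) :=
        fun x => (isClosed_le_iota x.1).inter hA.isClosed_compl
      obtain ⟨β, hβ⟩ := IsCompact.nonempty_iInter_of_directed_nonempty_isCompact_isClosed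
        (fun x : d => {β : ℕ → Bool | x.1 ≤ iota β} ∩ Aᶜ)
        (by
          intro x y
          obtain ⟨z, hz, hxz, hyz⟩ := hdir x.1 x.2 y.1 y.2
          exact ⟨⟨z, hz⟩, fun β h => ⟨le_trans hxz h.1, h.2⟩, fun β h => ⟨le_trans hyz h.1, h.2⟩⟩)
        (fun x => key x.1 x.2) (fun x => (hcl x).isCompact) hcl
      rw [Set.mem_iInter] at hβ
      exact (hβ (Classical.arbitrary d)).2 (haA β (ha.2 fun x hx => (hβ ⟨x, hx⟩).1))
    · ext β
      refine ⟨fun h => h β le_rfl, fun h α hα => ?_⟩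
      have : α = β := funext fun n => Option.some.inj (hα n (β n) rfl)
      exact this ▸ h
    · rintro B hB rfl x hx α hα
      exact (Topology.IsScott.isUpperSet_of_isOpen (D := Set.univ) hB) hα hx
end

section
/- Let B# = {f : ℕ → Option Bool // ∀ n, f (n+1) ≠ none → f n ≠ none} with the prefix order f ⊑ g iff ∀ n b, f n = some b → g n = some b, equipped with the Scott topology, and ι : (ℕ → Bool) → B#, (ι α) n = some (α n). Let D be a complete lattice that is compactly generated (every element is the supremum of the compact elements below it), equipped with its Scott topology. Then: (i) if f : B# → D is Scott-continuous, then f ∘ ι : (ℕ → Bool) → D is continuous from the product (Cantor) topology to the Scott topology on D; (ii) if g : (ℕ → Bool) → D is continuous from the Cantor topology to the Scott topology on D, then the map G : B# → D defined by G(x) = ⨅ {g α | x ⊑ ι α} is Scott-continuous and satisfies G ∘ ι = g. -/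
def truncB (α : ℕ → Bool) (n : ℕ) : Bsharp :=
  ⟨fun i => if i < n then some (α i) else none, fun i h => by
    by_cases hi : i + 1 < n
    · have : i < n := by omega
      simp [this]
    · simp [hi] at h⟩

theorem truncB_le_iff (α : ℕ → Bool) (n : ℕ) (x : Bsharp) :
    truncB α n ≤ x ↔ ∀ i < n, x.1 i = some (α i) := by
  constructor
  · intro h i hi
    exact h i (α i) (by simp [truncB, hi])
  · intro h i b hb
    by_cases hi : i < n
    · simp only [truncB, hi, if_true] at hb
      rw [h i hi, hb]
    · simp [truncB, hi] at hb

instance isScottBsharp : Topology.IsScott Bsharp Set.univ := ⟨rfl⟩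

theorem truncB_mono (α : ℕ → Bool) : Monotone (truncB α) := by
  intro m n h
  rw [truncB_le_iff]
  intro i hi
  have : i < n := by omega
  simp [truncB, this]

theorem truncB_isLUB (α : ℕ → Bool) : IsLUB (Set.range (truncB α)) (iota α) := by
  constructor
  · rintro _ ⟨n, rfl⟩
    rw [truncB_le_iff]
    intro i _
    rfl
  · intro x hx i b hb
    have h := (truncB_le_iff α (i + 1) x).1 (hx ⟨i + 1, rfl⟩) i (by omega)
    rw [h]
    exact hb

theorem iota_continuous : Continuous iota := by
  rw [continuous_def]
  intro U hU
  have hU' := (Topology.IsScott.isOpen_iff_isUpperSet_and_dirSupInaccOn (D := Set.univ)).1 hU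
  rw [isOpen_iff_mem_nhds]
  intro α hα
  obtain ⟨_, ⟨n, rfl⟩, hn⟩ := hU'.2 trivial (Set.range_nonempty (truncB α))
    (truncB_mono α).directed_le.directedOn_range (truncB_isLUB α) hα
  have hopen : IsOpen {β : ℕ → Bool | ∀ i ∈ Set.Iio n, β i = α i} := by
    have : {β : ℕ → Bool | ∀ i ∈ Set.Iio n, β i = α i} = (Set.Iio n).pi (fun i => {α i}) := by
      ext β; simp [Set.mem_pi]
    rw [this]
    exact isOpen_set_pi (Set.finite_Iio n) (fun _ _ => isOpen_discrete _)
  refine Filter.mem_of_superset (hopen.mem_nhds (fun _ _ => rfl)) ?_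
  intro β hβ
  refine hU'.1 ?_ hn
  rw [truncB_le_iff]
  intro i hi
  exact congrArg some (hβ i hi)

theorem isClosed_above (x : Bsharp) : IsClosed {α : ℕ → Bool | x ≤ iota α} := by
  have : {α : ℕ → Bool | x ≤ iota α} =
      ⋂ n : ℕ, (fun α : ℕ → Bool => α n) ⁻¹' {b | ∀ c, x.1 n = some c → some b = some c} := by
    ext α
    simp only [Set.mem_iInter]
    rfl
  rw [this]
  exact isClosed_iInter fun n => (isClosed_discrete _).preimage (continuous_apply n)

theorem iota_le_iota {α β : ℕ → Bool} (h : iota α ≤ iota β) : β = α := by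
  funext n
  exact Option.some.inj (h n (α n) rfl)

/-- Let `D` be a compactly generated complete lattice with its Scott topology. Then
(i) composing a Scott-continuous `f : B# → D` with `ι` yields a map continuous from the
Cantor topology to the Scott topology on `D`; (ii) every `g : ℕ → Bool → D` continuous
from the Cantor topology to the Scott topology on `D` extends along `ι` to the
Scott-continuous map `x ↦ ⨅ {g α | x ⊑ ι α}`. -/
theorem stmt16 (D : Type*) [CompleteLattice D] [IsCompactlyGenerated D] :
    (∀ f : Bsharp → D,
      @Continuous Bsharp D _ (Topology.scott D Set.univ) f →
      @Continuous (ℕ → Bool) D _ (Topology.scott D Set.univ) (f ∘ iota)) ∧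
    ∀ g : (ℕ → Bool) → D,
      @Continuous (ℕ → Bool) D _ (Topology.scott D Set.univ) g →
      @Continuous Bsharp D _ (Topology.scott D Set.univ)
        (fun x : Bsharp => ⨅ α ∈ {α : ℕ → Bool | x ≤ iota α}, g α) ∧
      (fun x : Bsharp => ⨅ α ∈ {α : ℕ → Bool | x ≤ iota α}, g α) ∘ iota = g := by
  letI : TopologicalSpace D := Topology.scott D Set.univ
  haveI : Topology.IsScott D Set.univ := ⟨rfl⟩
  refine ⟨fun f hf => hf.comp iota_continuous, fun g hg => ⟨?_, ?_⟩⟩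
  · rw [← Topology.IsScott.scottContinuousOn_iff_continuous (D := Set.univ)
      (fun _ _ _ => trivial)]
    intro d _ hne hdir x hx
    constructor
    · rintro _ ⟨y, hy, rfl⟩
      refine le_iInf₂ fun α hα => iInf₂_le α ?_
      exact le_trans (hx.1 hy) hα
    · intro b hb
      rw [le_iff_compact_le_imp]
      intro c hc hcx
      have hopen : IsOpen (Set.Ici c) := by
        rw [Topology.IsScott.isOpen_iff_isUpperSet_and_dirSupInaccOn (D := Set.univ)]
        refine ⟨isUpperSet_Ici c, fun s _ hs hs' u hu hcu => ?_⟩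
        obtain ⟨z, hz, hcz⟩ := hc s u hs hs' hu hcu
        exact ⟨z, hz, hcz⟩
      have hV : IsOpen (g ⁻¹' Set.Ici c) := hopen.preimage hg
      haveI : Nonempty d := hne.to_subtype
      obtain ⟨y, hy⟩ := exists_subset_nhds_of_compactSpace
        (V := fun y : d => {α : ℕ → Bool | y.1 ≤ iota α}) (U := g ⁻¹' Set.Ici c)
        (by
          intro y z
          obtain ⟨w, hw, hyw, hzw⟩ := hdir y.1 y.2 z.1 z.2
          exact ⟨⟨w, hw⟩, fun α h => le_trans hyw h, fun α h => le_trans hzw h⟩)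
        (fun y => isClosed_above y.1)
        (by
          intro α hα
          refine hV.mem_nhds ?_
          have hxa : x ≤ iota α := hx.2 fun y hy => Set.mem_iInter.1 hα ⟨y, hy⟩
          exact le_trans hcx (iInf₂_le α hxa))
      refine le_trans ?_ (hb ⟨y.1, y.2, rfl⟩)
      exact le_iInf₂ fun α hα => hy hα
  · funext α
    refine le_antisymm (iInf₂_le α (le_refl (iota α))) (le_iInf₂ fun β hβ => ?_)
    rw [iota_le_iota hβ]
end

section
/- Let Q be a type and f : (ℕ → Bool) → Set Q → Set Q be such that: (a) for every b : Set Q, the map α ↦ f α b is continuous from the product (Cantor) topology on ℕ → Bool to the Scott topology on Set Q; and (b) for every α, f α is Scott-continuous on Set Q, i.e., f α b = ⋃ {f α ↑c | c : Finset Q, ↑c ⊆ b}. Then for all α and b: f α b = ⋃ over finite c ⊆ b of ⋃ over finite prefixes x of α of ⋂_{β ∈ I_x} f β ↑c, where I_x = {β : ℕ → Bool | x is a prefix of β}. -/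
/-- Let `f : (ℕ → Bool) → Set Q → Set Q` be (a) continuous in its first argument from the
Cantor topology to the Scott topology on `Set Q` and (b) Scott-continuous in its second
argument. Then `f α b` is the union over finite `c ⊆ b` and finite prefixes `x` of `α` of
`⋂_{β ∈ I_x} f β c`. -/
theorem stmt17 {Q : Type*} (f : (ℕ → Bool) → Set Q → Set Q)
    (ha : ∀ b : Set Q,
      @Continuous (ℕ → Bool) (Set Q) _ (Topology.scott (Set Q) Set.univ) (fun α => f α b))
    (hb : ∀ (α : ℕ → Bool) (b : Set Q),
      f α b = ⋃ (c : Finset Q) (_ : (c : Set Q) ⊆ b), f α (c : Set Q)) :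
    ∀ (α : ℕ → Bool) (b : Set Q),
      f α b = ⋃ (c : Finset Q) (_ : (c : Set Q) ⊆ b),
        ⋃ (x : List Bool) (_ : α ∈ Cyl x), ⋂ β ∈ Cyl x, f β (c : Set Q) := by
  intro α b
  have hopen : ∀ q : Q, @IsOpen _ (Topology.scott (Set Q) Set.univ) {s : Set Q | q ∈ s} := by
    intro q
    letI : TopologicalSpace (Set Q) := Topology.scott (Set Q) Set.univ
    haveI : Topology.IsScott (Set Q) Set.univ := ⟨rfl⟩
    rw [Topology.IsScott.isOpen_iff_isUpperSet_and_dirSupInaccOn (D := Set.univ)]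
    refine ⟨fun s t hst hs => hst hs, ?_⟩
    intro d _ _ _ a hda hq
    have h : a = ⋃₀ d := hda.unique (isLUB_sSup d)
    subst h
    obtain ⟨t, ht, hqt⟩ := hq
    exact ⟨t, ht, hqt⟩
  ext q
  rw [hb α b]
  simp only [Set.mem_iUnion, Set.mem_iInter]
  constructor
  · rintro ⟨c, hc, hq⟩
    refine ⟨c, hc, ?_⟩
    have ho : IsOpen {β : ℕ → Bool | q ∈ f β c} :=
      @IsOpen.preimage _ _ _ (Topology.scott (Set Q) Set.univ) _ (ha c) _ (hopen q)
    obtain ⟨I, u, hu, hsub⟩ := isOpen_pi_iff.1 ho α hq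
    refine ⟨List.ofFn (fun i : Fin (I.sup id + 1) => α i), ?_, ?_⟩
    · intro i
      simp only [List.get_eq_getElem, List.getElem_ofFn]
    · intro β hβ
      apply hsub
      intro i hi
      have hlt : i < I.sup id + 1 := Nat.lt_succ_of_le (Finset.le_sup (f := id) hi)
      have h := hβ ⟨i, by simpa using hlt⟩
      simp only [List.get_eq_getElem, List.getElem_ofFn] at h
      rw [h]
      exact (hu i hi).2
  · rintro ⟨c, hc, x, hx, h⟩
    exact ⟨c, hc, h α hx⟩
end

section
/- Let Q be a type, enc : List Bool × Finset Q × Q → Q an injective function, and q₀ : Q an element not in the range of enc. Define, for a : Set Q, fun a : (ℕ → Bool) → Set Q → Set Q by fun a α v = {q | ∃ x a prefix of α, ∃ c : Finset Q, ↑c ⊆ v ∧ enc (x, c, q) ∈ a}; and define, for f : (ℕ → Bool) → Set Q → Set Q, lam f = {enc (x, c, q) | ∀ β ∈ I_x, q ∈ f β ↑c} ∪ {q₀}. Suppose f satisfies: (a) for every b : Set Q, α ↦ f α b is continuous from the Cantor topology to the Scott topology on Set Q; and (b) for every α, f α b = ⋃ {f α ↑c | c : Finset Q, ↑c ⊆ b}.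 Then fun (lam f) = f. -/
/-- `fun a α v`: application in the reflexive domain `Val = Set Q`, where `a` is viewed as
a (coded) set of triples `(x, c, q)`. -/
def funApp {Q : Type*} (enc : List Bool × Finset Q × Q → Q) (a : Set Q) :
    (ℕ → Bool) → Set Q → Set Q := fun α v =>
  {q | ∃ x : List Bool, α ∈ Cyl x ∧ ∃ c : Finset Q, (c : Set Q) ⊆ v ∧ enc (x, c, q) ∈ a}

/-- `lam f`: abstraction in the reflexive domain `Val = Set Q`, the coded set of all
triples `(x, c, q)` with `q ∈ f β c` for all `β ∈ I_x`, together with the extra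
element `q₀`. -/
def lamAbs {Q : Type*} (enc : List Bool × Finset Q × Q → Q) (q₀ : Q)
    (f : (ℕ → Bool) → Set Q → Set Q) : Set Q :=
  {r | ∃ (x : List Bool) (c : Finset Q) (q : Q),
    (∀ β ∈ Cyl x, q ∈ f β (c : Set Q)) ∧ r = enc (x, c, q)} ∪ {q₀}

/-- If `enc` is injective with `q₀` outside its range, and
`f : (ℕ → Bool) → Set Q → Set Q` is (a) continuous in its first argument from the Cantor
topology to the Scott topology on `Set Q` and (b) Scott-continuous in its second
argument, then `fun (lam f) = f`. -/
theorem stmt18 {Q : Type*} (enc : List Bool × Finset Q × Q → Q) (q₀ : Q)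
    (henc : Function.Injective enc) (hq₀ : q₀ ∉ Set.range enc)
    (f : (ℕ → Bool) → Set Q → Set Q)
    (ha : ∀ b : Set Q,
      @Continuous (ℕ → Bool) (Set Q) _ (Topology.scott (Set Q) Set.univ) (fun α => f α b))
    (hb : ∀ (α : ℕ → Bool) (b : Set Q),
      f α b = ⋃ (c : Finset Q) (_ : (c : Set Q) ⊆ b), f α (c : Set Q)) :
    funApp enc (lamAbs enc q₀ f) = f := by
  have hmono : ∀ α (b b' : Set Q), b ⊆ b' → f α b ⊆ f α b' := by
    intro α b b' h q hq
    rw [hb] at hq ⊢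
    simp only [Set.mem_iUnion] at hq ⊢
    obtain ⟨c, hc, hq⟩ := hq
    exact ⟨c, hc.trans h, hq⟩
  have hopen : ∀ q : Q, @IsOpen _ (Topology.scott (Set Q) Set.univ) {s : Set Q | q ∈ s} := by
    intro q
    refine (@Topology.IsScott.isOpen_iff_isUpperSet_and_dirSupInaccOn (Set Q) Set.univ _
      (Topology.scott (Set Q) Set.univ) _ (@Topology.IsScott.mk _ _ _
      (Topology.scott (Set Q) Set.univ) rfl)).2 ⟨fun s t hst hs => hst hs, ?_⟩
    intro d _ _ _ a hlub hqa
    have h1 : a = ⋃₀ d := hlub.unique (isLUB_sSup d)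
    have h2 : q ∈ ⋃₀ d := h1 ▸ hqa
    obtain ⟨t, ht, hqt⟩ := h2
    exact ⟨t, ht, hqt⟩
  funext α v
  ext q
  constructor
  · rintro ⟨x, hx, c, hc, hm | hm⟩
    · obtain ⟨x', c', q', h, he⟩ := hm
      have := henc he
      simp only [Prod.mk.injEq] at this
      obtain ⟨rfl, rfl, rfl⟩ := this
      exact hmono α _ _ hc (h α hx)
    · exact absurd ⟨_, hm⟩ hq₀
  · intro hq
    rw [hb] at hq
    simp only [Set.mem_iUnion] at hq
    obtain ⟨c, hc, hq⟩ := hq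
    have ho : IsOpen {β | q ∈ f β (c : Set Q)} :=
      @IsOpen.preimage _ _ _ (Topology.scott (Set Q) Set.univ) _ (ha c) _ (hopen q)
    obtain ⟨_, ⟨y, n, rfl⟩, hy, hsub⟩ :=
      (PiNat.isTopologicalBasis_cylinders (fun _ : ℕ => Bool)).exists_subset_of_mem_open
        (show α ∈ {β | q ∈ f β (c : Set Q)} from hq) ho
    refine ⟨List.ofFn (fun i : Fin n => α i), ?_, c, hc, Or.inl ⟨_, c, q, ?_, rfl⟩⟩
    · intro i
      simp
    · intro β hβ
      apply hsub
      intro i hi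
      have h1 := hβ ⟨i, by simpa using hi⟩
      simp at h1
      rw [h1]
      exact hy i hi
end
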